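/- Let u ∈ ℤ_p be such that there are infinitely many indices i with p ∤ u_i. The formal power series S_u(T) = Σ_{n=0}^∞ p^{ψ(n+1)}·u_{ψ(n+1)}·T^n ∈ ℚ_p[[T]] is rational (i.e. there exist polynomials P, Q ∈ ℚ_p[T] with Q ≠ 0 and Q·S_u = P) if and only if φ_{p,q}(u) is rational. -/

import Mathlib

/-!
Put `w n = p ^ n * u_n` and let `d n = ε₀(-q * u_n)`, the digits of `φ(u)`. The recurrence
`w (ψ (n + 1)) = q * w (ψ n) + d (ψ n) * p ^ ψ n` says that `(1 - q T) * S_u` differs by a constant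
from `D(T) = ∑ d (ψ n) * p ^ ψ n * T ^ n`, so that `S_u` and `D` are rational together. Now `D` has
coefficients in `ℚ` and converges at `T = 1` to `φ(u)`, since `ψ` enumerates the nonzero digits.
If `D` is rational over `ℚ_p`, it is rational over `ℚ`, and evaluating a reduced fraction at `T = 1`
gives a rational number. Conversely, the digits of a rational `p`-adic integer are eventually
periodic, which makes the coefficients of `D` eventually satisfy `b (n + m) = p ^ L * b n`.
-/

open scoped Classical

/-- `ε₀(u)`: the unique integer in `{0, …, p−1}` congruent to `u` modulo `p`. -/
noncomputable def eps0 {p : ℕ} [Fact p.Prime] (u : ℤ_[p]) : ℕ := (PadicInt.toZMod u).val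

/-- `φ_{p,q}(u) = Σ ε₀(-q·g^n(u)) p^n`, for a given iteration map `g`. -/
noncomputable def phi (p q : ℕ) [Fact p.Prime] (g : ℤ_[p] → ℤ_[p]) (u : ℤ_[p]) : ℤ_[p] :=
  ∑' n : ℕ, (eps0 (-((q : ℤ_[p]) * g^[n] u)) : ℤ_[p]) * (p : ℤ_[p]) ^ n

section RationalSeries

open scoped PowerSeries Polynomial

/-- A power series is rational if some nonzero polynomial multiple of it is a polynomial. -/
def IsRationalSeries {R : Type*} [CommSemiring R] (F : R⟦X⟧) : Prop :=
  ∃ P Q : R[X], Q ≠ 0 ∧ (Q : R⟦X⟧) * F = P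

theorem isRationalSeries_iff_of_mul_eq_add {R : Type*} [CommRing R] [IsDomain R]
    {A B : R[X]} {F G : R⟦X⟧} (hA : A ≠ 0) (h : (A : R⟦X⟧) * F = B + G) :
    IsRationalSeries F ↔ IsRationalSeries G := by
  constructor
  · rintro ⟨P, Q, hQ, hPQ⟩
    refine ⟨A * P - Q * B, Q, hQ, ?_⟩
    push_cast
    linear_combination (A : R⟦X⟧) * hPQ - (Q : R⟦X⟧) * h
  · rintro ⟨P, Q, hQ, hPQ⟩
    refine ⟨Q * B + P, Q * A, mul_ne_zero hQ hA, ?_⟩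
    push_cast
    linear_combination (Q : R⟦X⟧) * h + hPQ

theorem isRationalSeries_mk_succ_iff_of_recurrence {R : Type*} [CommRing R] [IsDomain R]
    {v b : ℕ → R} {c : R} (h : ∀ n, v (n + 1) = c * v n + b n) :
    IsRationalSeries (PowerSeries.mk fun n => v (n + 1)) ↔ IsRationalSeries (PowerSeries.mk b) := by
  refine isRationalSeries_iff_of_mul_eq_add (A := 1 - Polynomial.C c * Polynomial.X)
    (B := Polynomial.C (c * v 0)) (fun h0 => ?_) ?_
  · simpa using congrArg (Polynomial.coeff · 0) h0
  · ext n
    rw [Polynomial.coe_sub, Polynomial.coe_one, Polynomial.coe_mul, Polynomial.coe_C,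
      Polynomial.coe_X, Polynomial.coe_C, sub_mul, one_mul, mul_assoc, map_sub, map_add,
      PowerSeries.coeff_C_mul, PowerSeries.coeff_mk, PowerSeries.coeff_mk]
    cases n with
    | zero => simp [h 0]
    | succ n =>
      rw [PowerSeries.coeff_succ_X_mul, PowerSeries.coeff_mk, PowerSeries.coeff_C,
        if_neg n.succ_ne_zero, h (n + 1)]
      ring

theorem isRationalSeries_mk_of_eventually_geometric {R : Type*} [CommRing R] [Nontrivial R]
    {b : ℕ → R} {c : R} {m N : ℕ} (hm : 0 < m) (h : ∀ n, N ≤ n → b (n + m) = c * b n) :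
    IsRationalSeries (PowerSeries.mk b) := by
  let Q : R[X] := 1 - Polynomial.C c * Polynomial.X ^ m
  have hQ0 : Q.coeff 0 = 1 := by simp [Q, hm.ne]
  refine ⟨PowerSeries.trunc (N + m) (Q * PowerSeries.mk b), Q, ?_, ?_⟩
  · rintro hQ
    simp [hQ] at hQ0
  · ext n
    rw [Polynomial.coeff_coe, PowerSeries.coeff_trunc]
    split_ifs with hn
    · rfl
    · obtain ⟨k, rfl⟩ : ∃ k, n = k + m := ⟨n - m, by omega⟩
      simp only [Q, Polynomial.coe_sub, Polynomial.coe_one, Polynomial.coe_mul, Polynomial.coe_C,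
        Polynomial.coe_pow, Polynomial.coe_X, sub_mul, one_mul, map_sub, mul_assoc,
        PowerSeries.coeff_C_mul, PowerSeries.coeff_X_pow_mul, PowerSeries.coeff_mk]
      rw [h k (by omega), sub_self]

theorem IsRationalSeries.exists_isCoprime {k : Type*} [Field k] {F : k⟦X⟧}
    (hF : IsRationalSeries F) : ∃ P Q : k[X], IsCoprime Q P ∧ (Q : k⟦X⟧) * F = P := by
  obtain ⟨P, Q, hQ, hPQ⟩ := hF
  obtain ⟨Q', P', c, hcop, rfl, rfl⟩ := UniqueFactorizationMonoid.exists_reduced_factors Q hQ P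
  have hc : (c : k⟦X⟧) ≠ 0 := by
    simpa only [Ne, Polynomial.coe_eq_zero_iff] using left_ne_zero_of_mul hQ
  refine ⟨P', Q', hcop.isCoprime, mul_left_cancel₀ hc ?_⟩
  rw [← mul_assoc, ← Polynomial.coe_mul, hPQ, Polynomial.coe_mul]

theorem exists_polynomial_coeff_eq {R S : Type*} [Semiring R] [Semiring S] (f : R →+ S)
    (Q : R[X]) : ∃ Q' : S[X], ∀ i, Q'.coeff i = f (Q.coeff i) := by
  refine ⟨Q.sum fun i a => Polynomial.monomial i (f a), fun i => ?_⟩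
  simp +contextual [Polynomial.sum_def, Polynomial.coeff_monomial]

/- Some `k`-linear functional on `A` is nonzero at a coefficient of `Q`; as `F` has coefficients
in `k`, applying it to all coefficients of `Q` and `P` preserves the relation `Q * F = P`. -/
theorem IsRationalSeries.of_map {k A : Type*} [Field k] [CommRing A] [Algebra k A] {F : k⟦X⟧}
    (hF : IsRationalSeries (F.map (algebraMap k A))) : IsRationalSeries F := by
  obtain ⟨P, Q, hQ, hPQ⟩ := hF
  obtain ⟨i, hi⟩ : ∃ i, Q.coeff i ≠ 0 := by
    by_contra! hcoeff
    exact hQ (Polynomial.ext hcoeff)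
  obtain ⟨f, hf⟩ : ∃ f : A →ₗ[k] k, f (Q.coeff i) ≠ 0 := by
    by_contra! hvanish
    exact hi ((Module.forall_dual_apply_eq_zero_iff k _).1 hvanish)
  obtain ⟨Q', hQ'⟩ := exists_polynomial_coeff_eq f.toAddMonoidHom Q
  obtain ⟨P', hP'⟩ := exists_polynomial_coeff_eq f.toAddMonoidHom P
  refine ⟨P', Q', fun h0 => hf ?_, ?_⟩
  · simpa [h0] using (hQ' i).symm
  · ext n
    have hn := congrArg (f ∘ PowerSeries.coeff n) hPQ
    simp only [Function.comp_apply, PowerSeries.coeff_mul, Polynomial.coeff_coe,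
      PowerSeries.coeff_map, map_sum, mul_comm _ (algebraMap k A _), ← Algebra.smul_def,
      map_smul, smul_eq_mul] at hn
    rw [PowerSeries.coeff_mul, Polynomial.coeff_coe, hP', LinearMap.toAddMonoidHom_coe, ← hn]
    refine Finset.sum_congr rfl fun ij _ => ?_
    rw [Polynomial.coeff_coe, hQ', LinearMap.toAddMonoidHom_coe, mul_comm]

theorem hasSum_coeff_polynomial_mul {R : Type*} [CommSemiring R] [TopologicalSpace R]
    [IsTopologicalSemiring R] (Q : R[X]) {F : R⟦X⟧} {s : R}
    (h : HasSum (fun n => PowerSeries.coeff n F) s) :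
    HasSum (fun n => PowerSeries.coeff n ((Q : R⟦X⟧) * F)) (Q.eval 1 * s) := by
  induction Q using Polynomial.induction_on' with
  | add P Q hP hQ => simpa [add_mul] using hP.add hQ
  | monomial m a =>
    have hshift : HasSum (fun n => PowerSeries.coeff n (PowerSeries.X ^ m * F)) s := by
      rw [← (add_left_injective m).hasSum_iff]
      · simpa only [Function.comp_def, PowerSeries.coeff_X_pow_mul] using h
      · intro n hn
        rw [PowerSeries.coeff_X_pow_mul', if_neg]
        exact fun hmn => hn ⟨n - m, Nat.sub_add_cancel hmn⟩
    rw [← Polynomial.C_mul_X_pow_eq_monomial]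
    simpa [mul_assoc] using hshift.mul_left a

theorem hasSum_coeff_polynomial {R : Type*} [CommSemiring R] [TopologicalSpace R]
    [IsTopologicalSemiring R] (Q : R[X]) :
    HasSum (fun n => PowerSeries.coeff n (Q : R⟦X⟧)) (Q.eval 1) := by
  have hone : HasSum (fun n => PowerSeries.coeff n (1 : R⟦X⟧)) 1 := by
    simpa only [PowerSeries.coeff_one] using hasSum_ite_eq 0 (1 : R)
  simpa using hasSum_coeff_polynomial_mul Q hone

theorem IsRationalSeries.mem_range_algebraMap_of_hasSum {k A : Type*} [Field k] [CommRing A]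
    [Nontrivial A] [Algebra k A] [TopologicalSpace A] [IsTopologicalSemiring A] [T2Space A]
    {F : k⟦X⟧} {s : A} (hF : IsRationalSeries F)
    (hs : HasSum (fun n => algebraMap k A (PowerSeries.coeff n F)) s) :
    s ∈ Set.range (algebraMap k A) := by
  obtain ⟨P, Q, ⟨U, V, hUV⟩, hPQ⟩ := hF.exists_isCoprime
  have hmap : ((Q.map (algebraMap k A) : A[X]) : A⟦X⟧) * F.map (algebraMap k A) =
      (P.map (algebraMap k A) : A[X]) := by
    rw [Polynomial.polynomial_map_coe, Polynomial.polynomial_map_coe, ← map_mul, hPQ]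
  have heval : algebraMap k A (Q.eval 1) * s = algebraMap k A (P.eval 1) := by
    have hmul := hasSum_coeff_polynomial_mul (Q.map (algebraMap k A))
      (F := F.map (algebraMap k A)) (by simpa only [PowerSeries.coeff_map] using hs)
    rw [hmap] at hmul
    simpa only [Polynomial.eval_one_map] using hmul.unique (hasSum_coeff_polynomial _)
  have hQ1 : Q.eval 1 ≠ 0 := by
    intro hQ1
    have hP1 : P.eval 1 = 0 := by
      rw [hQ1, map_zero, zero_mul] at heval
      exact (map_eq_zero _).1 heval.symm
    simpa [hQ1, hP1] using congrArg (Polynomial.eval 1) hUV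
  refine ⟨(Q.eval 1)⁻¹ * P.eval 1, ?_⟩
  rw [map_mul, ← heval, ← mul_assoc, ← map_mul, inv_mul_cancel₀ hQ1, map_one, one_mul]

end RationalSeries

section Enumeration

variable {ψ : ℕ → ℕ}

theorem apply_succ_eq_of_const_off_range {α : Type*} {f : ℕ → α} (hψ : StrictMono ψ)
    (hf : ∀ k, k ∉ Set.range ψ → f (k + 1) = f k) (n : ℕ) : f (ψ (n + 1)) = f (ψ n + 1) := by
  suffices h : ∀ k, ψ n + 1 ≤ k → k ≤ ψ (n + 1) → f k = f (ψ n + 1) from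
    h _ (hψ n.lt_succ_self) le_rfl
  intro k hk
  induction k, hk using Nat.le_induction with
  | base => exact fun _ => rfl
  | succ k hk ih =>
    intro hk'
    rw [hf k, ih (by omega)]
    rintro ⟨m, rfl⟩
    have hnm : n < m := hψ.lt_iff_lt.1 hk
    have hmn : m < n + 1 := hψ.lt_iff_lt.1 hk'
    omega

theorem range_comp_add_left (hψ : StrictMono ψ) (n : ℕ) :
    Set.range (fun k => ψ (n + k)) = Set.range ψ ∩ Set.Ici (ψ n) := by
  ext i
  constructor
  · rintro ⟨k, rfl⟩
    exact ⟨⟨n + k, rfl⟩, hψ.monotone (Nat.le_add_right n k)⟩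
  · rintro ⟨⟨m, rfl⟩, hm⟩
    exact ⟨m - n, congrArg ψ (Nat.add_sub_cancel' (hψ.le_iff_le.1 hm))⟩

theorem exists_apply_add_eq_of_range_eventually_periodic (hψ : StrictMono ψ) {N L : ℕ}
    (hL : 0 < L) (h : ∀ i, N ≤ i → (i + L ∈ Set.range ψ ↔ i ∈ Set.range ψ)) :
    ∃ m, 0 < m ∧ ∀ n, N ≤ n → ψ (n + m) = ψ n + L := by
  have hN : N ≤ ψ N := hψ.le_apply
  obtain ⟨M, hM⟩ := (h (ψ N) hN).2 ⟨N, rfl⟩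
  have hNM : N < M := hψ.lt_iff_lt.1 (by omega)
  -- Both sides enumerate in increasing order the elements of `range ψ` that are `≥ ψ N + L`.
  have hshift : (fun k => ψ (M + k)) = fun k => ψ (N + k) + L := by
    have hmono (n : ℕ) : StrictMono fun k => ψ (n + k) := fun a b hab => hψ (by omega)
    refine ((hmono M).range_inj ((hmono N).add_const L)).1 ?_
    rw [← Function.comp_def (· + L), Set.range_comp, range_comp_add_left hψ,
      range_comp_add_left hψ, hM]
    ext i
    constructor
    · rintro ⟨hi, hle : ψ N + L ≤ i⟩
      obtain ⟨j, rfl⟩ : ∃ j, i = j + L := ⟨i - L, by omega⟩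
      exact ⟨j, ⟨(h j (by omega)).1 hi, show ψ N ≤ j by omega⟩, rfl⟩
    · rintro ⟨j, ⟨hj, hle : ψ N ≤ j⟩, rfl⟩
      exact ⟨(h j (by omega)).2 hj, Nat.add_le_add_right hle L⟩
  refine ⟨M - N, by omega, fun n hn => ?_⟩
  have hn' := congrFun hshift (n - N)
  rwa [show M + (n - N) = n + (M - N) by omega, Nat.add_sub_cancel' hn] at hn'

end Enumeration

section DigitExpansion

variable {p : ℕ} [Fact p.Prime]

theorem summable_mul_p_pow (a : ℕ → ℤ_[p]) : Summable fun n => a n * (p : ℤ_[p]) ^ n := by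
  have hp : (1 : ℝ) < p := mod_cast (Fact.out : p.Prime).one_lt
  refine Summable.of_norm_bounded
    (summable_geometric_of_lt_one (by positivity) (inv_lt_one_of_one_lt₀ hp)) fun n => ?_
  rw [norm_mul, norm_pow, PadicInt.norm_p]
  exact mul_le_of_le_one_left (by positivity) (PadicInt.norm_le_one _)

/-- `d 0, d 1, …` are the digits of the `p`-adic integer `x`, least significant first. -/
def IsDigitExpansion (d : ℕ → ℕ) (x : ℤ_[p]) : Prop :=
  (∀ n, d n < p) ∧ HasSum (fun n => (d n : ℤ_[p]) * (p : ℤ_[p]) ^ n) x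

namespace IsDigitExpansion

variable {d d' : ℕ → ℕ} {x : ℤ_[p]}

theorem exists_tail (h : IsDigitExpansion d x) :
    ∃ y : ℤ_[p], IsDigitExpansion (fun n => d (n + 1)) y ∧ x = d 0 + p * y := by
  have hsum := summable_mul_p_pow fun n => (d (n + 1) : ℤ_[p])
  refine ⟨_, ⟨fun n => h.1 (n + 1), hsum.hasSum⟩, ?_⟩
  rw [← h.2.tsum_eq, h.2.summable.tsum_eq_zero_add, ← hsum.tsum_mul_left, pow_zero, mul_one]
  simp only [pow_succ', mul_left_comm]

theorem toZMod_eq (h : IsDigitExpansion d x) : PadicInt.toZMod x = d 0 := by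
  obtain ⟨y, -, rfl⟩ := h.exists_tail
  simp

theorem digit_zero_unique (h : IsDigitExpansion d x) (h' : IsDigitExpansion d' x) :
    d 0 = d' 0 := by
  have hmod : (d 0 : ZMod p) = d' 0 := h.toZMod_eq.symm.trans h'.toZMod_eq
  rw [← ZMod.val_cast_of_lt (h.1 0), hmod, ZMod.val_cast_of_lt (h'.1 0)]

theorem unique (h : IsDigitExpansion d x) (h' : IsDigitExpansion d' x) : d = d' := by
  funext n
  induction n generalizing d d' x with
  | zero => exact h.digit_zero_unique h'
  | succ n ih =>
    obtain ⟨y, hy, hxy⟩ := h.exists_tail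
    obtain ⟨y', hy', hxy'⟩ := h'.exists_tail
    have hyy' : y = y' := by
      rw [hxy, h.digit_zero_unique h'] at hxy'
      exact mul_left_cancel₀ PadicInt.prime_p.ne_zero (add_left_cancel hxy')
    exact ih hy (hyy' ▸ hy')

/-- Iterated, this puts all tails of a rational `x` in the finite set of `t / D` with `|t| ≤ B`. -/
theorem exists_tail_of_mul_eq_intCast (h : IsDigitExpansion d x) {D : ℕ} {t B : ℤ}
    (hx : (D : ℤ_[p]) * x = t) (hD : D ≤ B) (ht : |t| ≤ B) :
    ∃ (y : ℤ_[p]) (t' : ℤ), IsDigitExpansion (fun n => d (n + 1)) y ∧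
      (D : ℤ_[p]) * y = t' ∧ |t'| ≤ B := by
  obtain ⟨y, hy, rfl⟩ := h.exists_tail
  have hdiff : (p : ℤ_[p]) * (D * y) = ((t - D * d 0 : ℤ) : ℤ_[p]) := by
    push_cast
    linear_combination hx
  obtain ⟨t', ht'⟩ : (p : ℤ) ∣ t - D * d 0 := by
    have hdvd : (p : ℤ_[p]) ^ 1 ∣ ((t - D * d 0 : ℤ) : ℤ_[p]) := ⟨D * y, by rw [← hdiff, pow_one]⟩
    simpa using (PadicInt.pow_p_dvd_int_iff 1 _).1 hdvd
  refine ⟨y, t', hy, ?_, ?_⟩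
  · refine mul_left_cancel₀ PadicInt.prime_p.ne_zero (hdiff.trans ?_)
    rw [ht']
    push_cast
    rfl
  · have hp : (0 : ℤ) < p := mod_cast (Fact.out : p.Prime).pos
    have hd : (d 0 : ℤ) ≤ p - 1 := by have := h.1 0; omega
    have hbound : (p : ℤ) * |t'| ≤ p * B :=
      calc (p : ℤ) * |t'| = |t - D * d 0| := by rw [ht', abs_mul, abs_of_pos hp]
        _ ≤ |t| + D * d 0 := by
          simpa only [abs_mul, Nat.abs_cast] using abs_sub t (D * d 0)
        _ ≤ B + B * (p - 1) := by gcongr; exact (abs_nonneg t).trans ht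
        _ = p * B := by ring
    exact le_of_mul_le_mul_left hbound hp

theorem eventually_periodic_of_mul_eq_intCast (h : IsDigitExpansion d x) {D : ℕ} (hD : D ≠ 0)
    {c : ℤ} (hx : (D : ℤ_[p]) * x = c) : ∃ N L, 0 < L ∧ ∀ n, N ≤ n → d (n + L) = d n := by
  set B : ℤ := max D |c|
  have htail (n : ℕ) : ∃ (y : ℤ_[p]) (t : ℤ), IsDigitExpansion (fun k => d (k + n)) y ∧
      (D : ℤ_[p]) * y = t ∧ |t| ≤ B := by
    induction n with
    | zero => exact ⟨x, c, h, hx, le_max_right _ _⟩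
    | succ n ih =>
      obtain ⟨y, t, hy, hyt, ht⟩ := ih
      simpa only [add_right_comm, add_assoc] using
        hy.exists_tail_of_mul_eq_intCast hyt (le_max_left _ _) ht
  choose y t hy hyt ht using htail
  have hmaps : Set.MapsTo t Set.univ (Set.Icc (-B) B) := fun n _ => abs_le.1 (ht n)
  obtain ⟨i, -, j, -, hij, htij⟩ :=
    Set.infinite_univ.exists_lt_map_eq_of_mapsTo hmaps (Set.finite_Icc _ _)
  have hyij : y i = y j := by
    apply mul_left_cancel₀ (Nat.cast_ne_zero.2 hD)
    rw [hyt, hyt, htij]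
  have hdij : (fun k => d (k + i)) = fun k => d (k + j) := (hyij ▸ hy i).unique (hy j)
  refine ⟨i, j - i, Nat.sub_pos_of_lt hij, fun n hn => ?_⟩
  have hn' := congrFun hdij (n - i)
  rw [Nat.sub_add_cancel hn, show n - i + j = n + (j - i) by omega] at hn'
  exact hn'.symm

theorem eventually_periodic_of_mem_range_ratCast (h : IsDigitExpansion d x)
    (hx : (x : ℚ_[p]) ∈ Set.range ((↑) : ℚ → ℚ_[p])) :
    ∃ N L, 0 < L ∧ ∀ n, N ≤ n → d (n + L) = d n := by
  obtain ⟨r, hr⟩ := hx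
  refine h.eventually_periodic_of_mul_eq_intCast r.den_ne_zero (c := r.num) (PadicInt.ext ?_)
  push_cast
  rw [← hr]
  exact_mod_cast congrArg ((↑) : ℚ → ℚ_[p]) (Rat.den_mul_eq_num r)

theorem hasSum_comp_of_range_eq_support (h : IsDigitExpansion d x) {ψ : ℕ → ℕ}
    (hψ : Function.Injective ψ) (hrange : Set.range ψ = Function.support d) :
    HasSum (fun n => (d (ψ n) : ℚ_[p]) * (p : ℚ_[p]) ^ ψ n) (x : ℚ_[p]) := by
  have hcast : HasSum (fun n => (d n : ℚ_[p]) * (p : ℚ_[p]) ^ n) (x : ℚ_[p]) := by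
    simpa [Function.comp_def, PadicInt.algebraMap_apply] using
      h.2.map (algebraMap ℤ_[p] ℚ_[p]) continuous_subtype_val
  refine (hψ.hasSum_iff fun n hn => ?_).2 hcast
  rw [hrange, Function.notMem_support] at hn
  rw [hn, Nat.cast_zero, zero_mul]

theorem isRationalSeries_iff (h : IsDigitExpansion d x) {ψ : ℕ → ℕ} (hψ : StrictMono ψ)
    (hrange : Set.range ψ = Function.support d) :
    IsRationalSeries (PowerSeries.mk fun n => (d (ψ n) : ℚ_[p]) * (p : ℚ_[p]) ^ ψ n) ↔
      (x : ℚ_[p]) ∈ Set.range ((↑) : ℚ → ℚ_[p]) := by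
  constructor
  · intro hrat
    have hmap : (PowerSeries.mk fun n => (d (ψ n) * p ^ ψ n : ℚ)).map (algebraMap ℚ ℚ_[p]) =
        PowerSeries.mk fun n => (d (ψ n) : ℚ_[p]) * (p : ℚ_[p]) ^ ψ n := by
      ext n
      simp
    rw [← hmap] at hrat
    exact hrat.of_map.mem_range_algebraMap_of_hasSum
      (by simpa using h.hasSum_comp_of_range_eq_support hψ.injective hrange)
  · intro hx
    obtain ⟨N, L, hL, hper⟩ := h.eventually_periodic_of_mem_range_ratCast hx
    obtain ⟨m, hm, hψm⟩ := exists_apply_add_eq_of_range_eventually_periodic hψ hL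
      fun i hi => by rw [hrange, Function.mem_support, Function.mem_support, hper i hi]
    refine isRationalSeries_mk_of_eventually_geometric (c := (p : ℚ_[p]) ^ L) (N := N) hm
      fun n hn => ?_
    rw [hψm n hn, hper _ (hn.trans hψ.le_apply), pow_add]
    ring

end IsDigitExpansion

end DigitExpansion

section Dynamics

variable {p q : ℕ} [Fact p.Prime] {g : ℤ_[p] → ℤ_[p]} {u : ℤ_[p]}

theorem eps0_eq_zero_iff {x : ℤ_[p]} : eps0 x = 0 ↔ (p : ℤ_[p]) ∣ x := by
  rw [eps0, ZMod.val_eq_zero, ← RingHom.mem_ker, PadicInt.ker_toZMod,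
    PadicInt.maximalIdeal_eq_span_p, Ideal.mem_span_singleton]

/-- The map `g` is `g_{p,q}`, with the division by `p` cleared. -/
def IsCollatzMap (p q : ℕ) [Fact p.Prime] (g : ℤ_[p] → ℤ_[p]) : Prop :=
  ∀ u : ℤ_[p], (p : ℤ_[p]) * g u =
    if (p : ℤ_[p]) ∣ u then u else (q : ℤ_[p]) * u + (eps0 (-((q : ℤ_[p]) * u)) : ℤ_[p])

/-- The digit `ε₀(-q * u_n)` of `φ_{p,q}(u)`. -/
noncomputable def phiDigit (q : ℕ) (g : ℤ_[p] → ℤ_[p]) (u : ℤ_[p]) (n : ℕ) : ℕ :=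
  eps0 (-((q : ℤ_[p]) * g^[n] u))

/-- The rescaled iterate `p ^ n * u_n`, which changes only at the indices `n` with `p ∤ u_n`. -/
noncomputable def scaledIterate (g : ℤ_[p] → ℤ_[p]) (u : ℤ_[p]) (n : ℕ) : ℚ_[p] :=
  (p : ℚ_[p]) ^ n * (g^[n] u : ℤ_[p])

theorem isDigitExpansion_phi : IsDigitExpansion (phiDigit q g u) (phi p q g u) :=
  ⟨fun _ => ZMod.val_lt _, (summable_mul_p_pow _).hasSum⟩

theorem phiDigit_ne_zero_iff (hpq : p.Coprime q) {n : ℕ} :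
    phiDigit q g u n ≠ 0 ↔ ¬ (p : ℤ_[p]) ∣ g^[n] u := by
  have hq : ¬ (p : ℤ_[p]) ∣ q := by
    rw [← eps0_eq_zero_iff, eps0, map_natCast, ZMod.val_eq_zero, ZMod.natCast_eq_zero_iff]
    exact (Nat.Prime.coprime_iff_not_dvd Fact.out).1 hpq
  rw [phiDigit, Ne, eps0_eq_zero_iff, dvd_neg, PadicInt.prime_p.dvd_mul, or_iff_right hq]

namespace IsCollatzMap

theorem scaledIterate_succ_of_dvd (hg : IsCollatzMap p q g) {n : ℕ}
    (h : (p : ℤ_[p]) ∣ g^[n] u) : scaledIterate g u (n + 1) = scaledIterate g u n := by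
  have hstep : (p : ℤ_[p]) * g (g^[n] u) = g^[n] u := (hg _).trans (if_pos h)
  rw [scaledIterate, scaledIterate, Function.iterate_succ_apply', pow_succ, mul_assoc]
  exact_mod_cast congrArg (fun x : ℤ_[p] => (p : ℚ_[p]) ^ n * x) hstep

theorem scaledIterate_succ_of_not_dvd (hg : IsCollatzMap p q g) {n : ℕ}
    (h : ¬ (p : ℤ_[p]) ∣ g^[n] u) :
    scaledIterate g u (n + 1) = q * scaledIterate g u n + phiDigit q g u n * (p : ℚ_[p]) ^ n := by
  have hstep : (p : ℤ_[p]) * g (g^[n] u) = q * g^[n] u + phiDigit q g u n :=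
    (hg _).trans (if_neg h)
  have hstep' := congrArg ((↑) : ℤ_[p] → ℚ_[p]) hstep
  push_cast at hstep'
  rw [scaledIterate, scaledIterate, Function.iterate_succ_apply', pow_succ]
  linear_combination (p : ℚ_[p]) ^ n * hstep'

theorem scaledIterate_enumeration_succ (hg : IsCollatzMap p q g) {ψ : ℕ → ℕ} (hψ : StrictMono ψ)
    (hrange : ∀ i, i ∈ Set.range ψ ↔ ¬ (p : ℤ_[p]) ∣ g^[i] u) (n : ℕ) :
    scaledIterate g u (ψ (n + 1)) =
      q * scaledIterate g u (ψ n) + phiDigit q g u (ψ n) * (p : ℚ_[p]) ^ ψ n := by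
  rw [apply_succ_eq_of_const_off_range hψ fun k hk =>
      hg.scaledIterate_succ_of_dvd (not_not.1 (mt (hrange k).2 hk)),
    hg.scaledIterate_succ_of_not_dvd ((hrange _).1 ⟨n, rfl⟩)]

end IsCollatzMap

end Dynamics

/-- If `ψ` enumerates (in increasing order) the indices `i` with `p ∤ u_i`, the power series
`S_u(T) = Σ p^{ψ(n+1)} u_{ψ(n+1)} T^n ∈ ℚ_p[[T]]` is rational iff `φ_{p,q}(u)` is rational. -/
theorem stmt8 (p q : ℕ) [Fact p.Prime] (hq : 0 < q) (hpq : Nat.Coprime p q)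
    (g : ℤ_[p] → ℤ_[p])
    (hg : ∀ u : ℤ_[p], (p : ℤ_[p]) * g u =
      if (p : ℤ_[p]) ∣ u then u
      else (q : ℤ_[p]) * u + (eps0 (-((q : ℤ_[p]) * u)) : ℤ_[p]))
    (u : ℤ_[p])
    (ψ : ℕ → ℕ) (hψmono : StrictMono ψ)
    (hψmem : ∀ n, ¬ (p : ℤ_[p]) ∣ g^[ψ n] u)
    (hψall : ∀ i, ¬ (p : ℤ_[p]) ∣ g^[i] u → ∃ n, ψ n = i) :
    (∃ P Q : Polynomial ℚ_[p], Q ≠ 0 ∧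
        (Q : PowerSeries ℚ_[p]) *
          PowerSeries.mk (fun n : ℕ =>
            (p : ℚ_[p]) ^ ψ (n + 1) * ((g^[ψ (n + 1)] u : ℤ_[p]) : ℚ_[p])) =
          (P : PowerSeries ℚ_[p])) ↔
      ((phi p q g u : ℤ_[p]) : ℚ_[p]) ∈ Set.range ((↑) : ℚ → ℚ_[p]) := by
  have hrange (i : ℕ) : i ∈ Set.range ψ ↔ ¬ (p : ℤ_[p]) ∣ g^[i] u :=
    ⟨by rintro ⟨n, rfl⟩; exact hψmem n, hψall i⟩
  have hsupport : Set.range ψ = Function.support (phiDigit q g u) :=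
    Set.ext fun i => (hrange i).trans (phiDigit_ne_zero_iff hpq).symm
  have hrec := IsCollatzMap.scaledIterate_enumeration_succ hg hψmono hrange
  exact (isRationalSeries_mk_succ_iff_of_recurrence (v := scaledIterate g u ∘ ψ) hrec).trans
    (isDigitExpansion_phi.isRationalSeries_iff hψmono hsupport)
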